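/- Let n ≥ 1 and suppose the Kasteleyn matrix K_n, regarded as a matrix over ℚ, is invertible. Then for all integers 0 ≤ i < j ≤ n−1, the ((2i,2n+1),(2j,2n+1)) entry of K_n⁻¹ equals Z_n^{{(2i,2n+1),(2j,2n+1)}}/Z_n; in particular it is nonnegative. -/

import Mathlib

open Finset

/-- Membership predicate for the vertex set `V_n` of the TSSCPP graph `G_n`:
`0 ≤ x₁ ≤ 2n`, `x₁ ≤ x₂ ≤ 2n+1`, with `(2n,2n+1)` removed when `n` is odd. -/
def memV (n : ℕ) (x : ℤ × ℤ) : Prop :=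
  0 ≤ x.1 ∧ x.1 ≤ 2*(n:ℤ) ∧ x.1 ≤ x.2 ∧ x.2 ≤ 2*(n:ℤ)+1 ∧
    ¬(n % 2 = 1 ∧ x.1 = 2*(n:ℤ) ∧ x.2 = 2*(n:ℤ)+1)

instance memV.decPred (n : ℕ) : DecidablePred (memV n) := fun x => by
  unfold memV; infer_instance

/-- The vertex set `V_n` as a finite set. -/
noncomputable def Vfin (n : ℕ) : Finset (ℤ × ℤ) :=
  (Finset.Icc (0:ℤ) (2*(n:ℤ)) ×ˢ Finset.Icc (0:ℤ) (2*(n:ℤ)+1)).filter (memV n)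

/-- The vertex set `V_n` as a set. -/
def Vset (n : ℕ) : Set (ℤ × ℤ) := {x | memV n x}

/-- The distinguished vertex `b_n = (2n, 2n+1-(n mod 2))`. -/
def bvertex (n : ℕ) : ℤ × ℤ := (2*(n:ℤ), 2*(n:ℤ)+1 - ((n % 2 : ℕ) : ℤ))

/-- Edge relation (with `x` the "lower-left" endpoint) of the TSSCPP graph `G_n`:
horizontal edges `((x₁,x₂),(x₁+1,x₂))` for `0 ≤ x₁ ≤ 2n−1`, `x₁ ≤ x₂ ≤ 2n+1`, `x₁+x₂` odd;
vertical edges `((x₁,x₂),(x₁,x₂+1))` for `0 ≤ x₁ ≤ 2n` (`2n−1` when `n` odd), `x₁ ≤ x₂ ≤ 2n`;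
diagonal edges `((x₁,x₁),(x₁+1,x₁+1))` for `0 ≤ x₁ ≤ 2n−1`. -/
def edgeRel (n : ℕ) (x y : ℤ × ℤ) : Prop :=
  (y.1 = x.1 + 1 ∧ y.2 = x.2 ∧ 0 ≤ x.1 ∧ x.1 ≤ 2*(n:ℤ) - 1 ∧ x.1 ≤ x.2 ∧
      x.2 ≤ 2*(n:ℤ)+1 ∧ Odd (x.1 + x.2)) ∨
  (y.1 = x.1 ∧ y.2 = x.2 + 1 ∧ 0 ≤ x.1 ∧ x.1 ≤ 2*(n:ℤ) - ((n % 2 : ℕ) : ℤ) ∧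
      x.1 ≤ x.2 ∧ x.2 ≤ 2*(n:ℤ)) ∨
  (x.1 = x.2 ∧ y.1 = x.1 + 1 ∧ y.2 = x.2 + 1 ∧ 0 ≤ x.1 ∧ x.1 ≤ 2*(n:ℤ) - 1)

/-- The TSSCPP graph `G_n` (as a graph on all of `ℤ × ℤ`; all of its edges join
vertices of `V_n`). -/
def Gph (n : ℕ) : SimpleGraph (ℤ × ℤ) where
  Adj x y := edgeRel n x y ∨ edgeRel n y x
  symm := ⟨fun x y h => Or.symm h⟩
  loopless := by
    constructor
    rintro ⟨x1, x2⟩ (h | h) <;>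
      rcases h with ⟨h1, h2, -⟩ | ⟨h1, h2, -⟩ | ⟨h0, h1, h2, -⟩ <;> omega

/-- `Zpm n U` = number of perfect matchings of the subgraph of `G_n` induced on `V_n \ U`. -/
noncomputable def Zpm (n : ℕ) (U : Set (ℤ × ℤ)) : ℕ :=
  Nat.card {M : ((Gph n).induce (Vset n \ U)).Subgraph // M.IsPerfectMatching}

/-- The entry function `k(x,y)` of the Kasteleyn matrix. -/
def kfun (x y : ℤ × ℤ) : ℚ :=
  if ((x.1 + x.2) % 2 = 0 ∧ x.2 = y.2 ∧ x.1 - y.1 = 1) ∨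
     ((x.1 + x.2) % 2 = 0 ∧ x.1 = y.1 ∧ (y.2 - x.2 = 1 ∨ x.2 - y.2 = 1)) ∨
     (x.1 = x.2 ∧ y.1 = y.2 ∧ y.1 = x.1 - 1)
  then 1 else 0

/-- The Kasteleyn matrix `K_n` of `G_n` over `ℚ`, rows and columns indexed by `V_n`. -/
def Kmat (n : ℕ) : Matrix ↥(Vfin n) ↥(Vfin n) ℚ :=
  fun x y => kfun x.val y.val - kfun y.val x.val

/-!
Order the vertices row by row from top to bottom, each row from left to right. Expanding the
Pfaffian of the Kasteleyn matrix along the first vertex mirrors the recursion that counts perfect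
matchings by the partner of their first vertex. An edge within a row joins consecutive vertices, and
an edge between two rows is not enclosed by any other edge, so that whenever an edge `ab` is split
off, all vertices after `b` are still present. The sign of the corresponding term hence depends only
on the number of vertices after `b`, and multiplying rows and columns by suitable signs makes all
terms positive. Deleting vertices of the top row does not change the number of vertices after those
of lower rows. The Pfaffians of `G_n` with and without two top vertices therefore both count perfect
matchings, and up to sign their quotient is an entry of the inverse matrix.
-/

section Pfaffian

open CliffordAlgebra

variable {R M α β : Type*} [CommRing R] [AddCommGroup M] [Module R M] [LinearOrder β]
  {B : LinearMap.BilinForm R M}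

lemma toQuadraticMap_neg_of_isAlt (hB : B.IsAlt) :
    (-B).toQuadraticMap = (0 : QuadraticForm R M) - 0 := by
  ext m
  simp [hB m]

/-- The linear functional on the exterior algebra induced by an alternating form `B`, sending
`v₁ ∧ ⋯ ∧ vₖ` to the Pfaffian of the matrix `B vᵢ vⱼ`. It is the scalar part of the linear
isomorphism between the Clifford algebras of two equal (here zero) quadratic forms that `-B`
defines. -/
noncomputable def pfaffianFunctional (hB : B.IsAlt) : ExteriorAlgebra R M →ₗ[R] R :=
  ExteriorAlgebra.algebraMapInv.toLinearMap ∘ₗ changeForm (toQuadraticMap_neg_of_isAlt hB)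

lemma pfaffianFunctional_one (hB : B.IsAlt) : pfaffianFunctional hB 1 = 1 := by
  simp [pfaffianFunctional]

lemma pfaffianFunctional_ι_mul (hB : B.IsAlt) (m : M) (x : ExteriorAlgebra R M) :
    pfaffianFunctional hB (ExteriorAlgebra.ι R m * x) =
      pfaffianFunctional hB (contractLeft (B m) x) := by
  have hι : ExteriorAlgebra.algebraMapInv (R := R) (ExteriorAlgebra.ι R m) = 0 := by
    simp [ExteriorAlgebra.algebraMapInv]
  simp [pfaffianFunctional, changeForm_ι_mul, ← changeForm_contractLeft, hι]

instance isTrans_key_le (key : α ↪ β) : IsTrans α fun x y => key x ≤ key y :=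
  ⟨fun _ _ _ => le_trans⟩

instance antisymm_key_le (key : α ↪ β) : Std.Antisymm fun x y => key x ≤ key y :=
  ⟨fun _ _ h h' => key.injective (le_antisymm h h')⟩

instance total_key_le (key : α ↪ β) : Std.Total fun x y => key x ≤ key y :=
  ⟨fun _ _ => le_total _ _⟩

/-- The number of elements of `S` preceding `b` in the order given by `key`. The point `b` need not
belong to `S`. -/
def rankIn (key : α ↪ β) (S : Finset α) (b : α) : ℕ :=
  #{s ∈ S | key s < key b}

lemma rankIn_eq_zero {key : α ↪ β} {S : Finset α} {b : α} (h : ∀ s ∈ S, key b ≤ key s) :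
    rankIn key S b = 0 := by
  simpa [rankIn, filter_eq_empty_iff] using h

/-- The exterior product of the vectors `v a` for `a ∈ S`, in the order given by `key`. -/
noncomputable def orderedWedge (R : Type*) [CommRing R] [Module R M] (v : α → M) (key : α ↪ β)
    (S : Finset α) : ExteriorAlgebra R M :=
  ((S.sort fun x y => key x ≤ key y).map fun a => ExteriorAlgebra.ι R (v a)).prod

lemma orderedWedge_empty (v : α → M) (key : α ↪ β) : orderedWedge R v key ∅ = 1 := by
  simp [orderedWedge]

/-- The Pfaffian of the Gram matrix `B (v a) (v b)` of an alternating form, with rows and columns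
in `S` ordered by `key`. -/
noncomputable def pfaffian (hB : B.IsAlt) (v : α → M) (key : α ↪ β) (S : Finset α) : R :=
  pfaffianFunctional hB (orderedWedge R v key S)

lemma pfaffian_empty (hB : B.IsAlt) (v : α → M) (key : α ↪ β) : pfaffian hB v key ∅ = 1 := by
  rw [pfaffian, orderedWedge_empty, pfaffianFunctional_one]

variable {v : α → M} {key : α ↪ β} {S : Finset α}

lemma orderedWedge_insert [DecidableEq α] {a : α} (ha : a ∉ S) (hmin : ∀ s ∈ S, key a ≤ key s) :
    orderedWedge R v key (insert a S) = ExteriorAlgebra.ι R (v a) * orderedWedge R v key S := by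
  simp [orderedWedge, Finset.sort_insert (fun x y => key x ≤ key y) hmin ha]

lemma ι_mul_ι_mul (m m' : M) (w : ExteriorAlgebra R M) :
    ExteriorAlgebra.ι R m * (ExteriorAlgebra.ι R m' * w) =
      -(ExteriorAlgebra.ι R m' * (ExteriorAlgebra.ι R m * w)) := by
  rw [← mul_assoc, ← mul_assoc, eq_neg_of_add_eq_zero_left (ExteriorAlgebra.ι_add_mul_swap m m'),
    neg_mul]

lemma ι_mul_orderedWedge_of_mem {x : α} (hx : x ∈ S) :
    ExteriorAlgebra.ι R (v x) * orderedWedge R v key S = 0 := by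
  classical
  induction S using Finset.induction_on_min_value key with
  | empty => simp at hx
  | insert a S ha hmin ih =>
    rw [orderedWedge_insert ha hmin]
    rcases mem_insert.1 hx with rfl | hxS
    · rw [← mul_assoc, ExteriorAlgebra.ι_sq_zero, zero_mul]
    · rw [ι_mul_ι_mul, ih hxS, mul_zero, neg_zero]

variable [DecidableEq α]

lemma rankIn_insert {a b : α} (ha : a ∉ S) (hab : key a < key b) :
    rankIn key (insert a S) b = rankIn key S b + 1 := by
  simp [rankIn, filter_insert, hab, ha]

lemma rankIn_erase {a b : α} (hab : key b ≤ key a) :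
    rankIn key (S.erase a) b = rankIn key S b := by
  rw [rankIn, filter_erase, erase_eq_of_notMem (by simp [hab]), rankIn]

lemma ι_mul_orderedWedge_of_notMem {x : α} (hx : x ∉ S) :
    ExteriorAlgebra.ι R (v x) * orderedWedge R v key S =
      (-1 : R) ^ rankIn key S x • orderedWedge R v key (insert x S) := by
  induction S using Finset.induction_on_min_value key with
  | empty => rw [orderedWedge_insert hx (by simp), rankIn_eq_zero (by simp), pow_zero, one_smul]
  | insert a S ha hmin ih =>
    obtain ⟨hxa, hxS⟩ : x ≠ a ∧ x ∉ S := by simpa using hx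
    rcases lt_or_gt_of_ne (key.injective.ne hxa) with hlt | hgt
    · have hxmin : ∀ s ∈ insert a S, key x ≤ key s :=
        forall_mem_insert _ _ _ |>.2 ⟨hlt.le, fun s hs => hlt.le.trans (hmin s hs)⟩
      rw [orderedWedge_insert hx hxmin, rankIn_eq_zero hxmin, pow_zero, one_smul]
    · have hamin : ∀ s ∈ insert x S, key a ≤ key s :=
        forall_mem_insert _ _ _ |>.2 ⟨hgt.le, hmin⟩
      rw [insert_comm, orderedWedge_insert (by simp [ha, hxa.symm]) hamin,
        orderedWedge_insert ha hmin, rankIn_insert ha hgt, ι_mul_ι_mul, ih hxS, mul_smul_comm,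
        pow_succ, mul_neg_one, neg_smul]

lemma contractLeft_orderedWedge (d : Module.Dual R M) :
    contractLeft (Q := 0) d (orderedWedge R v key S) =
      ∑ b ∈ S, ((-1) ^ rankIn key S b * d (v b)) • orderedWedge R v key (S.erase b) := by
  induction S using Finset.induction_on_min_value key with
  | empty => rw [orderedWedge_empty, contractLeft_one, sum_empty]
  | insert a S ha hmin ih =>
    have hlater (b : α) (hb : b ∈ S) :
        ExteriorAlgebra.ι R (v a) *
            (((-1) ^ rankIn key S b * d (v b)) • orderedWedge R v key (S.erase b)) =
          -(((-1) ^ rankIn key (insert a S) b * d (v b)) •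
            orderedWedge R v key ((insert a S).erase b)) := by
      have hab : a ≠ b := fun h => ha (h ▸ hb)
      rw [erase_insert_of_ne hab, orderedWedge_insert (by simp [ha])
        fun s hs => hmin s (mem_of_mem_erase hs), rankIn_insert ha
        (lt_of_le_of_ne (hmin b hb) (key.injective.ne hab)), mul_smul_comm, ← neg_smul, pow_succ]
      congr 1
      ring
    calc contractLeft (Q := 0) d (orderedWedge R v key (insert a S))
        = d (v a) • orderedWedge R v key S -
            ExteriorAlgebra.ι R (v a) * contractLeft (Q := 0) d (orderedWedge R v key S) := by
          rw [orderedWedge_insert ha hmin]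
          exact contractLeft_ι_mul ..
      _ = _ := by
          rw [ih, mul_sum, sum_congr rfl hlater, sum_neg_distrib, sub_neg_eq_add, sum_insert ha,
            erase_insert ha, rankIn_eq_zero (by simpa using hmin), pow_zero, one_mul]

lemma sum_mul_pfaffian_erase (hB : B.IsAlt) (x : α) :
    ∑ b ∈ S, (-1) ^ rankIn key S b * B (v x) (v b) * pfaffian hB v key (S.erase b) =
      if x ∈ S then 0 else (-1) ^ rankIn key S x * pfaffian hB v key (insert x S) := by
  calc ∑ b ∈ S, (-1) ^ rankIn key S b * B (v x) (v b) * pfaffian hB v key (S.erase b)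
      = pfaffianFunctional hB (ExteriorAlgebra.ι R (v x) * orderedWedge R v key S) := by
        rw [pfaffianFunctional_ι_mul, contractLeft_orderedWedge, map_sum]
        simp only [map_smul, smul_eq_mul, pfaffian]
    _ = _ := by
        split_ifs with hx
        · rw [ι_mul_orderedWedge_of_mem hx, map_zero]
        · rw [ι_mul_orderedWedge_of_notMem hx, map_smul, smul_eq_mul, pfaffian]

lemma pfaffian_insert_of_min (hB : B.IsAlt) {a : α} (ha : a ∉ S) (hmin : ∀ s ∈ S, key a ≤ key s) :
    pfaffian hB v key (insert a S) =
      ∑ b ∈ S, (-1) ^ rankIn key S b * B (v a) (v b) * pfaffian hB v key (S.erase b) := by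
  rw [sum_mul_pfaffian_erase, if_neg ha, rankIn_eq_zero hmin, pow_zero, one_mul]

/-- The cofactor of the entry `(y, x)` of the Gram matrix on `S`, divided by the Pfaffian: up to
sign, the Pfaffian of the Gram matrix on `S` without `x` and `y`. -/
noncomputable def pfaffianCofactor (hB : B.IsAlt) (v : α → M) (key : α ↪ β) (S : Finset α)
    (x y : α) : R :=
  if x = y then 0 else
    (-1) ^ (rankIn key (S.erase y) x + rankIn key (S.erase y) y) *
      pfaffian hB v key ((S.erase y).erase x)

lemma sum_mul_pfaffianCofactor (hB : B.IsAlt) {u y : α} (hu : u ∈ S) (hy : y ∈ S) :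
    ∑ b ∈ S, B (v u) (v b) * pfaffianCofactor hB v key S b y =
      if u = y then pfaffian hB v key S else 0 := by
  have hsum : ∑ b ∈ S, B (v u) (v b) * pfaffianCofactor hB v key S b y =
      (-1) ^ rankIn key (S.erase y) y * ∑ b ∈ S.erase y, (-1) ^ rankIn key (S.erase y) b *
        B (v u) (v b) * pfaffian hB v key ((S.erase y).erase b) := by
    rw [← add_sum_erase S _ hy, pfaffianCofactor, if_pos rfl, mul_zero, zero_add, mul_sum]
    refine sum_congr rfl fun b hb => ?_
    rw [pfaffianCofactor, if_neg (ne_of_mem_erase hb)]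
    ring
  rw [hsum, sum_mul_pfaffian_erase]
  rcases eq_or_ne u y with rfl | huy
  · rw [if_neg (notMem_erase u S), if_pos rfl, insert_erase hu, ← mul_assoc, ← pow_add,
      Even.neg_one_pow ⟨_, rfl⟩, one_mul]
  · rw [if_pos (mem_erase.2 ⟨huy, hu⟩), if_neg huy, mul_zero]

end Pfaffian

section Pairing

variable {α : Type*} {G : SimpleGraph α} {S : Finset α}

/-- `f` exchanges the partners of a perfect matching of the subgraph of `G` induced on `S`, and
fixes every other vertex. Perfect matchings on all subsets `S` thus live in the single type
`Equiv.Perm α`. -/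
structure IsPairing (G : SimpleGraph α) (S : Finset α) (f : Equiv.Perm α) : Prop where
  involutive : Function.Involutive f
  adj : ∀ x ∈ S, G.Adj x (f x)
  apply_of_notMem : ∀ x ∉ S, f x = x

namespace IsPairing

variable {f : Equiv.Perm α}

lemma apply_mem (hf : IsPairing G S f) {x : α} (hx : x ∈ S) : f x ∈ S := by
  by_contra h
  exact (hf.adj x hx).ne (f.injective (hf.apply_of_notMem _ h)).symm

lemma ext {g : Equiv.Perm α} (hf : IsPairing G S f) (hg : IsPairing G S g)
    (h : ∀ x ∈ S, f x = g x) : f = g := by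
  ext x
  by_cases hx : x ∈ S
  · exact h x hx
  · rw [hf.apply_of_notMem x hx, hg.apply_of_notMem x hx]

variable [DecidableEq α]

lemma erase_pair (hf : IsPairing G S f) (a : α) :
    IsPairing G ((S.erase a).erase (f a)) (f * Equiv.swap a (f a)) where
  involutive x := by
    have := hf.involutive x
    have := hf.involutive a
    grind [Equiv.Perm.mul_apply]
  adj x hx := by
    simp only [mem_erase] at hx
    rw [Equiv.Perm.mul_apply, Equiv.swap_apply_of_ne_of_ne hx.2.1 hx.1]
    exact hf.adj x hx.2.2
  apply_of_notMem x hx := by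
    have := hf.involutive a
    have := hf.apply_of_notMem x
    grind [Equiv.Perm.mul_apply]

lemma insert_pair {a b : α} (hf : IsPairing G S f) (hab : G.Adj a b) (ha : a ∉ S)
    (hb : b ∉ S) :
    IsPairing G (insert a (insert b S)) (f * Equiv.swap a b) where
  involutive x := by
    have := hf.involutive x
    have := hf.apply_of_notMem a ha
    have := hf.apply_of_notMem b hb
    grind [Equiv.Perm.mul_apply]
  adj x hx := by
    have := hf.apply_of_notMem a ha
    have := hf.apply_of_notMem b hb
    have := hf.adj x
    have := hab.symm
    grind [Equiv.Perm.mul_apply]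
  apply_of_notMem x hx := by
    have := hf.apply_of_notMem x
    grind [Equiv.Perm.mul_apply]

end IsPairing

lemma isPairing_mul_swap_iff [DecidableEq α] {f : Equiv.Perm α} {a b : α} (ha : a ∉ S)
    (hb : b ∈ S) (hab : G.Adj a b) :
    IsPairing G (S.erase b) (f * Equiv.swap a b) ↔ IsPairing G (insert a S) f ∧ f a = b := by
  constructor
  · intro h
    have hins := h.insert_pair hab (by simp [ha]) (notMem_erase b S)
    rw [insert_erase hb, mul_assoc, Equiv.swap_mul_self, mul_one] at hins
    exact ⟨hins, by simpa using h.apply_of_notMem b (notMem_erase b S)⟩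
  · rintro ⟨h, rfl⟩
    simpa [ha] using h.erase_pair a

lemma exists_isPairing {p : S → S} (hp : Function.Involutive p)
    (hadj : ∀ v : S, G.Adj v (p v)) : ∃ f, IsPairing G S f ∧ ∀ v : S, f v = p v := by
  classical
  let f : Equiv.Perm α := Equiv.Perm.ofSubtype (hp.toPerm p)
  have hfp (v : S) : f v = p v := Equiv.Perm.ofSubtype_apply_coe _ v
  have hf_notMem (x : α) (hx : x ∉ S) : f x = x := Equiv.Perm.ofSubtype_apply_of_not_mem _ hx
  refine ⟨f, ⟨fun x => ?_, fun x hx => ?_, hf_notMem⟩, hfp⟩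
  · by_cases hx : x ∈ S
    · rw [hfp ⟨x, hx⟩, hfp, hp]
    · rw [hf_notMem x hx, hf_notMem x hx]
  · rw [hfp ⟨x, hx⟩]
    exact hadj ⟨x, hx⟩

lemma finite_setOf_isPairing (G : SimpleGraph α) (S : Finset α) :
    {f | IsPairing G S f}.Finite := by
  refine Set.Finite.of_injOn (f := fun f (x : S) => f x) (t := Set.univ.pi fun _ => (S : Set α))
    (fun f hf x _ => hf.apply_mem x.2) (fun f hf g hg h => hf.ext hg fun x hx => ?_)
    (Set.Finite.pi fun _ => S.finite_toSet)
  exact congrFun h ⟨x, hx⟩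

/-- The perfect matchings of the subgraph of `G` induced on `S`, as permutations. -/
noncomputable def pairings (G : SimpleGraph α) (S : Finset α) : Finset (Equiv.Perm α) :=
  (finite_setOf_isPairing G S).toFinset

lemma mem_pairings {f : Equiv.Perm α} : f ∈ pairings G S ↔ IsPairing G S f := by
  simp [pairings]

lemma pairings_empty (G : SimpleGraph α) : pairings G ∅ = {1} := by
  ext f
  rw [mem_pairings, mem_singleton]
  constructor
  · exact fun h => Equiv.ext fun x => h.apply_of_notMem x (notMem_empty x)
  · rintro rfl
    exact ⟨fun _ => rfl, by simp, fun _ _ => rfl⟩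

lemma card_pairings_insert [DecidableEq α] [DecidableRel G.Adj] {a : α} (ha : a ∉ S) :
    #(pairings G (insert a S)) = ∑ b ∈ S with G.Adj a b, #(pairings G (S.erase b)) := by
  have hpartner : ∀ f ∈ pairings G (insert a S), f a ∈ {b ∈ S | G.Adj a b} := by
    intro f hf
    have hf' := mem_pairings.1 hf
    have hadj := hf'.adj a (mem_insert_self a S)
    exact mem_filter.2
      ⟨mem_of_mem_insert_of_ne (hf'.apply_mem (mem_insert_self a S)) hadj.ne', hadj⟩
  rw [card_eq_sum_card_fiberwise hpartner]
  refine sum_congr rfl fun b hb => card_equiv (Equiv.mulRight (Equiv.swap a b)) fun f => ?_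
  obtain ⟨hbS, hab⟩ := mem_filter.1 hb
  simp only [mem_filter, mem_pairings, Equiv.coe_mulRight]
  exact (isPairing_mul_swap_iff ha hbS hab).symm

/-- The perfect matching of the induced subgraph whose edges are the 2-cycles of a pairing. -/
def IsPairing.toSubgraph {f : Equiv.Perm α} (hf : IsPairing G S f) :
    (G.induce (S : Set α)).Subgraph where
  verts := Set.univ
  Adj v w := f v = w
  adj_sub {v w} h := by simpa [← h] using hf.adj v v.2
  edge_vert _ := Set.mem_univ _
  symm := ⟨fun v w h => by simpa [← h] using hf.involutive v⟩

lemma IsPairing.isPerfectMatching_toSubgraph {f : Equiv.Perm α} (hf : IsPairing G S f) :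
    hf.toSubgraph.IsPerfectMatching := by
  rw [SimpleGraph.Subgraph.isPerfectMatching_iff]
  exact fun v => ⟨⟨f v, hf.apply_mem v.2⟩, rfl, fun w hw => Subtype.ext (Eq.symm hw)⟩

lemma exists_toSubgraph_eq (M : (G.induce (S : Set α)).Subgraph) (hM : M.IsPerfectMatching) :
    ∃ (f : Equiv.Perm α) (hf : IsPairing G S f), hf.toSubgraph = M := by
  choose p hp hpu using SimpleGraph.Subgraph.isPerfectMatching_iff.1 hM
  obtain ⟨f, hf, hfp⟩ := exists_isPairing (G := G) (p := p)
    (fun v => (hpu (p v) v (hp v).symm).symm) fun v => (hp v).adj_sub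
  refine ⟨f, hf, SimpleGraph.Subgraph.ext (Set.eq_univ_of_forall hM.2).symm ?_⟩
  ext v w
  change f v = w ↔ M.Adj v w
  rw [hfp v, Subtype.coe_inj]
  exact ⟨fun h => h ▸ hp v, fun h => (hpu v w h).symm⟩

lemma IsPairing.even_card {f : Equiv.Perm α} (hf : IsPairing G S f) : Even #S := by
  simpa using hf.isPerfectMatching_toSubgraph.even_card

lemma card_isPerfectMatching_induce (G : SimpleGraph α) (S : Finset α) :
    Nat.card {M : (G.induce (S : Set α)).Subgraph // M.IsPerfectMatching} =
      #(pairings G S) := by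
  rw [pairings, ← Set.ncard_eq_toFinset_card _ (finite_setOf_isPairing G S), ← Nat.card_coe_set_eq]
  symm
  refine Nat.card_eq_of_bijective
    (fun f => ⟨f.2.toSubgraph, f.2.isPerfectMatching_toSubgraph⟩) ⟨fun f g h => ?_, ?_⟩
  · refine Subtype.ext (f.2.ext g.2 fun x hx => Eq.symm ?_)
    have hadj : f.2.toSubgraph.Adj ⟨x, hx⟩ ⟨f.1 x, f.2.apply_mem hx⟩ := rfl
    rwa [show f.2.toSubgraph = g.2.toSubgraph from congrArg Subtype.val h] at hadj
  · rintro ⟨M, hM⟩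
    obtain ⟨f, hf, rfl⟩ := exists_toSubgraph_eq M hM
    exact ⟨⟨f, hf⟩, rfl⟩

end Pairing

section NonNesting

variable {α β R M : Type*} [LinearOrder β] [CommRing R] [AddCommGroup M] [Module R M]
  {G : SimpleGraph α} {key : α ↪ β} {V S : Finset α}

/-- No vertex of `V` lies strictly between `a` and `b` in the order given by `key`. -/
def IsConsecutive (key : α ↪ β) (V : Finset α) (a b : α) : Prop :=
  ∀ c ∈ V, ¬(key a < key c ∧ key c < key b)

/-- No edge of `G` with endpoints in `V` strictly encloses the pair `a`, `b` in the order given by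
`key`. -/
def IsUnnested (G : SimpleGraph α) (key : α ↪ β) (V : Finset α) (a b : α) : Prop :=
  ∀ a' ∈ V, ∀ b' ∈ V, key a' < key a → key b < key b' → ¬G.Adj a' b'

/-- Weights on the edges of `G` within `V` which make every perfect matching contribute `+1` to the
Pfaffian when the rows and columns are ordered by `key`. -/
structure IsPfaffianWeight (G : SimpleGraph α) (key : α ↪ β) (V : Finset α) (A : α → α → R) :
    Prop where
  eq_zero : ∀ a ∈ V, ∀ b ∈ V, ¬G.Adj a b → A a b = 0
  eq_sign : ∀ a ∈ V, ∀ b ∈ V, G.Adj a b → key a < key b →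
    IsConsecutive key V a b ∧ A a b = 1 ∨
      IsUnnested G key V a b ∧ A a b = (-1) ^ #{c ∈ V | key b < key c}

/-- What is left of `V` when vertices are removed in pairs of neighbours, each pair containing the
first remaining vertex: a removed vertex lies before `S` or has a neighbour before `S`. -/
structure IsRemainder (G : SimpleGraph α) (key : α ↪ β) (V S : Finset α) : Prop where
  subset : S ⊆ V
  exists_adj : ∀ x ∈ V, x ∉ S → ∀ s ∈ S, key s < key x →
    ∃ a ∈ V, G.Adj a x ∧ ∀ t ∈ S, key a < key t

lemma IsRemainder.refl (G : SimpleGraph α) (key : α ↪ β) (V : Finset α) :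
    IsRemainder G key V V :=
  ⟨Subset.rfl, fun _ hx hx' => absurd hx hx'⟩

lemma rankIn_add_card_filter_gt {b : α} (hb : b ∈ S) :
    rankIn key S b + 1 + #{s ∈ S | key b < key s} = #S := by
  classical
  have hle : {s ∈ S | ¬key s < key b} = insert b {s ∈ S | key b < key s} := by
    ext s
    have : key s = key b ↔ s = b := key.injective.eq_iff
    grind
  rw [← card_filter_add_card_filter_not (s := S) (fun s => key s < key b), hle,
    card_insert_of_notMem (by simp), rankIn]
  ring

section Step

variable [DecidableEq α] {a b : α}

lemma IsRemainder.erase (h : IsRemainder G key V (insert a S)) (hmin : ∀ s ∈ S, key a < key s)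
    (hab : G.Adj a b) : IsRemainder G key V (S.erase b) where
  subset := (erase_subset b S).trans ((subset_insert a S).trans h.subset)
  exists_adj x hxV hx s hs hsx := by
    rcases eq_or_ne x b with rfl | hxb
    · exact ⟨a, h.subset (mem_insert_self a S), hab, fun t ht => hmin t (mem_of_mem_erase ht)⟩
    · have hxa : x ≠ a := by
        rintro rfl
        exact hsx.not_gt (hmin s (mem_of_mem_erase hs))
      obtain ⟨c, hcV, hcx, hc⟩ := h.exists_adj x hxV (by simp_all) s
        (mem_insert_of_mem (mem_of_mem_erase hs)) hsx
      exact ⟨c, hcV, hcx, fun t ht => hc t (mem_insert_of_mem (mem_of_mem_erase ht))⟩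

lemma IsRemainder.filter_gt_eq (h : IsRemainder G key V (insert a S)) (hab : key a < key b)
    (hun : IsUnnested G key V a b) : {s ∈ S | key b < key s} = {c ∈ V | key b < key c} := by
  refine (filter_subset_filter _ ((subset_insert a S).trans h.subset)).antisymm fun c hc => ?_
  obtain ⟨hcV, hbc⟩ := mem_filter.1 hc
  by_contra hcS
  have hc' : c ∉ insert a S := by grind
  obtain ⟨d, hdV, hdc, hd⟩ := h.exists_adj c hcV hc' a (mem_insert_self a S) (hab.trans hbc)
  exact hun d hdV c hcV (hd a (mem_insert_self a S)) hbc hdc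

lemma IsPfaffianWeight.neg_one_pow_rankIn_mul {A : α → α → R} (hA : IsPfaffianWeight G key V A)
    (h : IsRemainder G key V (insert a S)) (heven : Even #(insert a S))
    (hmin : ∀ s ∈ S, key a < key s) (hb : b ∈ S) (hab : G.Adj a b) :
    (-1) ^ rankIn key S b * A a b = 1 := by
  have haV := h.subset (mem_insert_self a S)
  have hbV := h.subset (mem_insert_of_mem hb)
  rcases hA.eq_sign a haV b hbV hab (hmin b hb) with ⟨hcons, hone⟩ | ⟨hun, hsign⟩
  · have hfirst : ∀ s ∈ S, key b ≤ key s := fun s hs =>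
      not_lt.1 fun hsb => hcons s (h.subset (mem_insert_of_mem hs)) ⟨hmin s hs, hsb⟩
    rw [hone, rankIn_eq_zero hfirst, pow_zero, one_mul]
  · have ha : a ∉ S := fun ha => (hmin a ha).false
    rw [card_insert_of_notMem ha, ← rankIn_add_card_filter_gt (key := key) hb] at heven
    rw [hsign, ← h.filter_gt_eq (hmin b hb) hun, ← pow_add]
    exact Even.neg_one_pow (by grind)

end Step

theorem pfaffian_eq_card_pairings_of_isRemainder {B : LinearMap.BilinForm R M} (hB : B.IsAlt)
    {v : α → M} (hA : IsPfaffianWeight G key V fun a b => B (v a) (v b))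
    (h : IsRemainder G key V S) (heven : Even #S) :
    pfaffian hB v key S = #(pairings G S) := by
  classical
  induction hk : #S using Nat.strong_induction_on generalizing S with
  | _ k ih =>
  induction S using Finset.induction_on_min_value key with
  | empty => simp [pfaffian_empty, pairings_empty]
  | insert a S ha hmin _ =>
    have hlt : ∀ s ∈ S, key a < key s := fun s hs =>
      lt_of_le_of_ne (hmin s hs) (key.injective.ne fun h => ha (h ▸ hs))
    rw [pfaffian_insert_of_min hB ha hmin, card_pairings_insert ha, sum_filter, Nat.cast_sum]
    refine sum_congr rfl fun b hb => ?_
    split_ifs with hab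
    · rw [hA.neg_one_pow_rankIn_mul h heven hlt hb hab, one_mul]
      have hcard : #(insert a S) = #(S.erase b) + 2 := by
        rw [card_insert_of_notMem ha, ← card_erase_add_one hb]
      exact ih _ (by omega) (h.erase hlt hab) (by grind) rfl
    · rw [hA.eq_zero a (h.subset (mem_insert_self a S)) b (h.subset (mem_insert_of_mem hb)) hab]
      simp

theorem pfaffian_eq_card_pairings {B : LinearMap.BilinForm R M} (hB : B.IsAlt) {v : α → M}
    (hA : IsPfaffianWeight G key V fun a b => B (v a) (v b)) (heven : Even #V) :
    pfaffian hB v key V = #(pairings G V) :=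
  pfaffian_eq_card_pairings_of_isRemainder hB hA (.refl G key V) heven

end NonNesting

section Kasteleyn

lemma mem_Vfin {n : ℕ} {x : ℤ × ℤ} : x ∈ Vfin n ↔ memV n x := by
  simp only [Vfin, mem_filter, mem_product, mem_Icc, memV]
  omega

lemma Zpm_eq_card_pairings (n : ℕ) {U : Set (ℤ × ℤ)} {S : Finset (ℤ × ℤ)}
    (h : (S : Set (ℤ × ℤ)) = Vset n \ U) : Zpm n U = #(pairings (Gph n) S) := by
  rw [Zpm, ← h, card_isPerfectMatching_induce]

/-- The partner map of a perfect matching of `G_n` consisting of vertical edges, except that the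
bottom vertices of columns `4m + 1` and `4m + 2` are joined by a diagonal edge and the following
vertices of columns `4m + 2` and `4m + 3` by a horizontal one. -/
def stdPartner (x : ℤ × ℤ) : ℤ × ℤ :=
  if x.1 % 4 = 1 ∧ x.2 = x.1 then (x.1 + 1, x.2 + 1)
  else if x.1 % 4 = 2 ∧ x.2 = x.1 then (x.1 - 1, x.2 - 1)
  else if x.1 % 4 = 2 ∧ x.2 = x.1 + 1 then (x.1 + 1, x.2)
  else if x.1 % 4 = 3 ∧ x.2 = x.1 then (x.1 - 1, x.2)
  else if x.2 % 2 = 0 then (x.1, x.2 + 1)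
  else (x.1, x.2 - 1)

lemma stdPartner_stdPartner {x : ℤ × ℤ} (hx : x.1 ≤ x.2) : stdPartner (stdPartner x) = x := by
  obtain ⟨c, h⟩ := x
  dsimp only at hx
  obtain ⟨y, hy⟩ : ∃ y, y = stdPartner (c, h) := ⟨_, rfl⟩
  rw [← hy]
  unfold stdPartner at hy
  dsimp only at hy
  split_ifs at hy <;> subst hy <;> unfold stdPartner <;> dsimp only <;> split_ifs <;>
    first | (exfalso; omega) | (rw [Prod.mk.injEq]; omega)

lemma memV_stdPartner {n : ℕ} {x : ℤ × ℤ} (hx : memV n x) : memV n (stdPartner x) := by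
  unfold memV stdPartner at *
  split_ifs <;> dsimp only <;> omega

lemma adj_stdPartner {n : ℕ} {x : ℤ × ℤ} (hx : memV n x) : (Gph n).Adj x (stdPartner x) := by
  obtain ⟨c, h⟩ := x
  unfold memV at hx
  simp only [Gph, edgeRel, Int.odd_iff]
  unfold stdPartner
  dsimp only at *
  split_ifs <;> dsimp only
  · left; right; right; omega
  · right; right; right; omega
  · left; left; omega
  · right; left; omega
  · left; right; left; omega
  · right; right; left; omega

lemma exists_isPairing_Vfin (n : ℕ) : ∃ f, IsPairing (Gph n) (Vfin n) f := by
  have hV (v : Vfin n) : memV n v := mem_Vfin.1 v.2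
  obtain ⟨f, hf, -⟩ := exists_isPairing (G := Gph n)
    (p := fun v : Vfin n => ⟨stdPartner v, mem_Vfin.2 (memV_stdPartner (hV v))⟩)
    (fun v => Subtype.ext (stdPartner_stdPartner (hV v).2.2.1)) fun v => adj_stdPartner (hV v)
  exact ⟨f, hf⟩

lemma even_card_Vfin (n : ℕ) : Even #(Vfin n) :=
  (exists_isPairing_Vfin n).choose_spec.even_card

lemma card_pairings_Vfin_ne_zero (n : ℕ) : #(pairings (Gph n) (Vfin n)) ≠ 0 :=
  have ⟨_, hf⟩ := exists_isPairing_Vfin n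
  card_ne_zero_of_mem (mem_pairings.2 hf)

/-- The reading order of the plane: rows from top to bottom, each row from left to right. -/
def readingKey : ℤ × ℤ ↪ ℤ ×ₗ ℤ where
  toFun x := toLex (-x.2, x.1)
  inj' x y h := by
    simpa [Prod.ext_iff, and_comm] using h

lemma readingKey_lt_iff {x y : ℤ × ℤ} :
    readingKey x < readingKey y ↔ y.2 < x.2 ∨ x.2 = y.2 ∧ x.1 < y.1 := by
  change toLex (-x.2, x.1) < toLex (-y.2, y.1) ↔ _
  simp [Prod.Lex.toLex_lt_toLex]

/-- The alternating form on `ℚ^(ℤ × ℤ)` whose matrix is the Kasteleyn matrix of the plane. -/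
noncomputable def kasteleynForm : LinearMap.BilinForm ℚ (ℤ × ℤ →₀ ℚ) :=
  Finsupp.linearCombination ℚ fun x => Finsupp.linearCombination ℚ fun y => kfun x y - kfun y x

/-- A sign for each vertex; multiplying the rows and columns of the Kasteleyn matrix by these signs
makes every perfect matching contribute `+1` to the Pfaffian in reading order. It is
`(-1)^x₁` times a sign of period `4` in `x₂`, which compensates the parity of the number
`1 + 2 + ⋯ + x₂` of vertices below row `x₂`. -/
def gaugeSign (x : ℤ × ℤ) : ℚ := if x.1 % 2 = 0 ↔ x.2 % 4 = 0 then 1 else -1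

/-- The basis vector of a vertex, rescaled by its sign. -/
noncomputable def gaugeVector (x : ℤ × ℤ) : ℤ × ℤ →₀ ℚ := Finsupp.single x (gaugeSign x)

lemma kasteleynForm_gaugeVector (x y : ℤ × ℤ) :
    kasteleynForm (gaugeVector x) (gaugeVector y) =
      gaugeSign x * gaugeSign y * (kfun x y - kfun y x) := by
  simp [kasteleynForm, gaugeVector, mul_assoc]

lemma isAlt_kasteleynForm : kasteleynForm.IsAlt := by
  refine LinearMap.isAlt_iff_eq_neg_flip.2 ?_
  ext x y
  simp [kasteleynForm]

lemma gaugeSign_mul_self (x : ℤ × ℤ) : gaugeSign x * gaugeSign x = 1 := by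
  rw [gaugeSign]
  split_ifs <;> norm_num

lemma adj_of_kfun_ne_zero {n : ℕ} {x y : ℤ × ℤ} (hx : memV n x) (hy : memV n y)
    (h : kfun x y ≠ 0) : (Gph n).Adj x y := by
  simp only [memV] at hx hy
  simp only [kfun, ne_eq, ite_eq_right_iff, one_ne_zero, imp_false, not_not] at h
  simp only [Gph, edgeRel, Int.odd_iff]
  rcases h with h | ⟨h0, h1, h2 | h2⟩ | h
  · right; left; omega
  · left; right; left; omega
  · right; right; left; omega
  · right; right; right; omega

lemma cases_of_adj {n : ℕ} {a b : ℤ × ℤ} (hab : (Gph n).Adj a b)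
    (hlt : readingKey a < readingKey b) :
    (b = (a.1 + 1, a.2) ∧ (a.1 + a.2) % 2 = 1) ∨ b = (a.1, a.2 - 1) ∨
      a.1 = a.2 ∧ b = (a.1 - 1, a.2 - 1) := by
  rw [readingKey_lt_iff] at hlt
  simp only [Gph, edgeRel, Int.odd_iff] at hab
  simp only [Prod.ext_iff]
  omega

lemma card_filter_row {n : ℕ} {c h : ℤ} (hc : -1 ≤ c) (hch : c ≤ h) (hh : h ≤ 2 * n) :
    (#{v ∈ Vfin n | v.2 = h ∧ c < v.1} : ℤ) = h - c := by
  have hrow : {v ∈ Vfin n | v.2 = h ∧ c < v.1} = Ioc c h ×ˢ {h} := by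
    ext v
    simp only [mem_filter, mem_Vfin, memV, mem_product, mem_Ioc, mem_singleton]
    omega
  rw [hrow, card_product, Int.card_Ioc, card_singleton]
  omega

lemma even_card_filter_snd_lt {n h : ℕ} (hh : h ≤ 2 * n + 1) :
    Even #{v ∈ Vfin n | v.2 < (h : ℤ)} ↔ h % 4 = 0 ∨ h % 4 = 3 := by
  induction h with
  | zero =>
    have hempty : {v ∈ Vfin n | v.2 < 0} = ∅ := filter_eq_empty_iff.2 fun v hv => by
      have hv' := mem_Vfin.1 hv
      unfold memV at hv'
      omega
    simp [hempty]
  | succ h ih =>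
    have hsplit : {v ∈ Vfin n | v.2 < ((h + 1 : ℕ) : ℤ)} =
        {v ∈ Vfin n | v.2 < (h : ℤ)}.disjUnion {v ∈ Vfin n | v.2 = (h : ℤ) ∧ -1 < v.1}
          (disjoint_filter.2 fun v _ => by omega) := by
      ext v
      simp only [mem_filter, mem_Vfin, memV, mem_disjUnion]
      omega
    have hrow := card_filter_row (n := n) (c := -1) (h := h) (by omega) (by omega) (by omega)
    rw [hsplit, card_disjUnion, Nat.even_add, ih (by omega), Nat.even_iff]
    omega

/-- `V` is obtained from `V_n` by removing vertices of the top row. -/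
structure IsTopTruncation (n : ℕ) (V : Finset (ℤ × ℤ)) : Prop where
  subset : V ⊆ Vfin n
  mem_of_le : ∀ x ∈ Vfin n, x.2 ≤ 2 * n → x ∈ V

variable {n : ℕ} {V : Finset (ℤ × ℤ)}

lemma IsTopTruncation.memV_of_mem (hV : IsTopTruncation n V) {x : ℤ × ℤ} (hx : x ∈ V) : memV n x :=
  mem_Vfin.1 (hV.subset hx)

lemma IsTopTruncation.even_card_filter_gt (hV : IsTopTruncation n V) {b : ℤ × ℤ} (hb : b ∈ V)
    (hbtop : b.2 ≤ 2 * n) :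
    Even #{c ∈ V | readingKey b < readingKey c} ↔
      ((b.2 % 4 = 0 ∨ b.2 % 4 = 3) ↔ b.1 % 2 = b.2 % 2) := by
  have hbV := hV.memV_of_mem hb
  unfold memV at hbV
  have hsplit : {c ∈ V | readingKey b < readingKey c} =
      {v ∈ Vfin n | v.2 < b.2}.disjUnion {v ∈ Vfin n | v.2 = b.2 ∧ b.1 < v.1}
        (disjoint_filter.2 fun v _ => by omega) := by
    ext c
    have hsub := @hV.subset c
    have hmem := hV.mem_of_le c
    simp only [mem_filter, mem_disjUnion, readingKey_lt_iff]
    grind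
  have hrow := card_filter_row (n := n) (c := b.1) (h := b.2) (by omega) (by omega) (by omega)
  obtain ⟨h, hbh⟩ := Int.eq_ofNat_of_zero_le (hbV.1.trans hbV.2.2.1)
  rw [hbh] at hrow hbtop ⊢
  rw [hsplit, card_disjUnion, Nat.even_add, hbh, even_card_filter_snd_lt (by omega), Nat.even_iff]
  omega

lemma isUnnested_of_eq {a b : ℤ × ℤ} (hV : IsTopTruncation n V) (hb : b ∈ V)
    (hab : b = (a.1, a.2 - 1) ∨ a.1 = a.2 ∧ b = (a.1 - 1, a.2 - 1)) :
    IsUnnested (Gph n) readingKey V a b := by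
  intro a' ha' b' hb' ha hbb' hadj
  have hbV := hV.memV_of_mem hb
  have haV' := hV.memV_of_mem ha'
  have hbV' := hV.memV_of_mem hb'
  unfold memV at hbV haV' hbV'
  rw [readingKey_lt_iff] at ha hbb'
  simp only [Prod.ext_iff] at hab
  simp only [Gph, edgeRel, Int.odd_iff] at hadj
  omega

lemma isConsecutive_of_eq {a b : ℤ × ℤ} (hab : b = (a.1 + 1, a.2)) :
    IsConsecutive readingKey V a b := by
  rintro c - ⟨hac, hcb⟩
  rw [readingKey_lt_iff] at hac hcb
  simp only [Prod.ext_iff] at hab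
  omega

lemma kasteleynForm_gaugeVector_right {a b : ℤ × ℤ} (hab : b = (a.1 + 1, a.2))
    (hodd : (a.1 + a.2) % 2 = 1) : kasteleynForm (gaugeVector a) (gaugeVector b) = 1 := by
  have hk : kfun a b - kfun b a = -1 := by
    simp only [kfun, hab, true_and]
    split_ifs <;> first | (exfalso; omega) | norm_num
  have hgauge : gaugeSign b = -gaugeSign a := by
    simp only [gaugeSign, hab]
    split_ifs <;> first | (exfalso; omega) | norm_num
  rw [kasteleynForm_gaugeVector, hk, hgauge]
  linear_combination gaugeSign_mul_self a

lemma kasteleynForm_gaugeVector_down {a b : ℤ × ℤ}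
    (hab : b = (a.1, a.2 - 1) ∨ a.1 = a.2 ∧ b = (a.1 - 1, a.2 - 1)) :
    kasteleynForm (gaugeVector a) (gaugeVector b) =
      if (b.2 % 4 = 0 ∨ b.2 % 4 = 3) ↔ b.1 % 2 = b.2 % 2 then 1 else -1 := by
  rw [kasteleynForm_gaugeVector]
  rcases hab with rfl | ⟨ha, rfl⟩
  · have hk : kfun a (a.1, a.2 - 1) - kfun (a.1, a.2 - 1) a =
        if a.1 % 2 = a.2 % 2 then 1 else -1 := by
      simp only [kfun, true_and]
      split_ifs <;> first | (exfalso; omega) | norm_num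
    simp only [hk, gaugeSign]
    split_ifs <;> first | (exfalso; omega) | norm_num
  · have hk : kfun a (a.1 - 1, a.2 - 1) - kfun (a.1 - 1, a.2 - 1) a = 1 := by
      simp only [kfun, and_true]
      split_ifs <;> first | (exfalso; omega) | norm_num
    simp only [hk, gaugeSign]
    split_ifs <;> first | (exfalso; omega) | norm_num

lemma isPfaffianWeight_kasteleynForm (hV : IsTopTruncation n V) :
    IsPfaffianWeight (Gph n) readingKey V
      fun a b => kasteleynForm (gaugeVector a) (gaugeVector b) where
  eq_zero a ha b hb hab := by
    have haV := hV.memV_of_mem ha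
    have hbV := hV.memV_of_mem hb
    have hkab : kfun a b = 0 := by_contra fun h => hab (adj_of_kfun_ne_zero haV hbV h)
    have hkba : kfun b a = 0 := by_contra fun h => hab (adj_of_kfun_ne_zero hbV haV h).symm
    rw [kasteleynForm_gaugeVector, hkab, hkba, sub_zero, mul_zero]
  eq_sign a ha b hb hab hlt := by
    have hdown (h : b = (a.1, a.2 - 1) ∨ a.1 = a.2 ∧ b = (a.1 - 1, a.2 - 1)) :
        kasteleynForm (gaugeVector a) (gaugeVector b) =
          (-1) ^ #{c ∈ V | readingKey b < readingKey c} := by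
      have haV := hV.memV_of_mem ha
      unfold memV at haV
      have heven := hV.even_card_filter_gt hb (by rcases h with rfl | ⟨-, rfl⟩ <;> grind)
      simp only [kasteleynForm_gaugeVector_down h, neg_one_pow_eq_ite, heven]
    rcases cases_of_adj hab hlt with ⟨h, hodd⟩ | h
    · exact Or.inl ⟨isConsecutive_of_eq h, kasteleynForm_gaugeVector_right h hodd⟩
    · exact Or.inr ⟨isUnnested_of_eq hV hb h, hdown h⟩

/-- The Pfaffian of the rescaled Kasteleyn matrix on `V`, in reading order. -/
noncomputable def kasteleynPfaffian (V : Finset (ℤ × ℤ)) : ℚ :=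
  pfaffian isAlt_kasteleynForm gaugeVector readingKey V

lemma kasteleynPfaffian_eq_card_pairings (hV : IsTopTruncation n V) (heven : Even #V) :
    kasteleynPfaffian V = #(pairings (Gph n) V) :=
  pfaffian_eq_card_pairings _ (isPfaffianWeight_kasteleynForm hV) heven

lemma kasteleynPfaffian_Vfin (n : ℕ) : kasteleynPfaffian (Vfin n) = #(pairings (Gph n) (Vfin n)) :=
  kasteleynPfaffian_eq_card_pairings ⟨Subset.rfl, fun _ hx _ => hx⟩ (even_card_Vfin n)

/-- The inverse Kasteleyn matrix, as a matrix of signed ratios of Pfaffians. -/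
noncomputable def kasteleynInverse (n : ℕ) : Matrix (Vfin n) (Vfin n) ℚ := fun x y =>
  gaugeSign x * gaugeSign y *
    pfaffianCofactor isAlt_kasteleynForm gaugeVector readingKey (Vfin n) x y /
      kasteleynPfaffian (Vfin n)

lemma Kmat_mul_kasteleynInverse (n : ℕ) : Kmat n * kasteleynInverse n = 1 := by
  ext u y
  have hpf : kasteleynPfaffian (Vfin n) ≠ 0 := by
    rw [kasteleynPfaffian_Vfin]
    exact_mod_cast card_pairings_Vfin_ne_zero n
  have hsum := sum_mul_pfaffianCofactor (v := gaugeVector) (key := readingKey)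
    isAlt_kasteleynForm u.2 y.2
  calc (Kmat n * kasteleynInverse n) u y
      = gaugeSign u * gaugeSign y / kasteleynPfaffian (Vfin n) *
          ∑ b ∈ Vfin n, kasteleynForm (gaugeVector u) (gaugeVector b) *
            pfaffianCofactor isAlt_kasteleynForm gaugeVector readingKey (Vfin n) b y := by
        rw [Matrix.mul_apply, mul_sum, ← sum_coe_sort (Vfin n)]
        refine sum_congr rfl fun b _ => ?_
        rw [kasteleynForm_gaugeVector, Kmat, kasteleynInverse]
        linear_combination (-(kfun u b - kfun b u) * gaugeSign b * gaugeSign y *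
          pfaffianCofactor isAlt_kasteleynForm gaugeVector readingKey (Vfin n) b y /
            kasteleynPfaffian (Vfin n)) * gaugeSign_mul_self u
    _ = (1 : Matrix (Vfin n) (Vfin n) ℚ) u y := by
        rw [hsum, Matrix.one_apply]
        rcases eq_or_ne u y with rfl | huy
        · rw [if_pos rfl, if_pos rfl, gaugeSign_mul_self]
          exact one_div_mul_cancel hpf
        · rw [if_neg (Subtype.coe_injective.ne huy), if_neg huy, mul_zero]

lemma isUnit_det_Kmat (n : ℕ) : IsUnit (Kmat n).det :=
  Matrix.isUnit_det_of_right_inverse (Kmat_mul_kasteleynInverse n)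

lemma Kmat_inv (n : ℕ) : (Kmat n)⁻¹ = kasteleynInverse n :=
  Matrix.inv_eq_right_inv (Kmat_mul_kasteleynInverse n)

lemma rankIn_top {x : ℤ × ℤ} (hx : x ∈ Vfin n) (htop : x.2 = 2 * n + 1) :
    (rankIn readingKey (Vfin n) x : ℤ) = x.1 := by
  have hxV := mem_Vfin.1 hx
  unfold memV at hxV
  have hleft : {s ∈ Vfin n | readingKey s < readingKey x} = Ico 0 x.1 ×ˢ {x.2} := by
    ext s
    simp only [mem_filter, mem_Vfin, memV, readingKey_lt_iff, mem_product, mem_Ico, mem_singleton]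
    omega
  rw [rankIn, hleft, card_product, Int.card_Ico, card_singleton]
  omega

lemma gaugeSign_mul_neg_one_pow_rankIn {x y : ℤ × ℤ} (hx : x ∈ Vfin n) (hy : y ∈ Vfin n)
    (hxtop : x.2 = 2 * n + 1) (hytop : y.2 = 2 * n + 1) :
    gaugeSign x * gaugeSign y *
      (-1) ^ (rankIn readingKey (Vfin n) x + rankIn readingKey (Vfin n) y) = 1 := by
  have hxrank := rankIn_top hx hxtop
  have hyrank := rankIn_top hy hytop
  simp only [neg_one_pow_eq_ite, Nat.even_iff, gaugeSign]
  split_ifs <;> first | (exfalso; omega) | norm_num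

lemma pfaffianCofactor_top {x y : ℤ × ℤ} (hx : x ∈ Vfin n) (hy : y ∈ Vfin n)
    (hxtop : x.2 = 2 * n + 1) (hytop : y.2 = 2 * n + 1) (hxy : x.1 < y.1) :
    gaugeSign x * gaugeSign y *
        pfaffianCofactor isAlt_kasteleynForm gaugeVector readingKey (Vfin n) x y =
      #(pairings (Gph n) (((Vfin n).erase y).erase x)) := by
  have hlt : readingKey x < readingKey y :=
    readingKey_lt_iff.2 (Or.inr ⟨hxtop.trans hytop.symm, hxy⟩)
  have hne : x ≠ y := fun h => hxy.ne (congrArg Prod.fst h)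
  have htrunc : IsTopTruncation n (((Vfin n).erase y).erase x) :=
    ⟨(erase_subset _ _).trans (erase_subset _ _), fun v hv hvtop => by grind⟩
  have heven : Even #(((Vfin n).erase y).erase x) := by
    have hcard := card_erase_add_one (mem_erase.2 ⟨hne, hx⟩)
    have hcard' := card_erase_add_one hy
    have := even_card_Vfin n
    grind
  rw [pfaffianCofactor, if_neg hne, rankIn_erase hlt.le, rankIn_erase le_rfl, ← mul_assoc,
    gaugeSign_mul_neg_one_pow_rankIn hx hy hxtop hytop, one_mul]
  exact kasteleynPfaffian_eq_card_pairings htrunc heven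

end Kasteleyn

theorem Kinv_top_two_general (n : ℕ) {x y : Vfin n} (hx : x.1.2 = 2 * n + 1)
    (hy : y.1.2 = 2 * n + 1) (hxy : x.1.1 < y.1.1) :
    IsUnit (Kmat n).det ∧ (Kmat n)⁻¹ x y = (Zpm n {x.1, y.1} : ℚ) / (Zpm n ∅ : ℚ) ∧
      0 ≤ (Kmat n)⁻¹ x y := by
  have hZ : Zpm n ∅ = #(pairings (Gph n) (Vfin n)) :=
    Zpm_eq_card_pairings n (by ext v; simp [mem_Vfin, Vset])
  have hZxy : Zpm n {x.1, y.1} = #(pairings (Gph n) (((Vfin n).erase y).erase x)) :=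
    Zpm_eq_card_pairings n (by ext v; simp [mem_Vfin, Vset]; tauto)
  have hentry : (Kmat n)⁻¹ x y = (Zpm n {x.1, y.1} : ℚ) / (Zpm n ∅ : ℚ) := by
    rw [Kmat_inv, kasteleynInverse, pfaffianCofactor_top x.2 y.2 hx hy hxy, kasteleynPfaffian_Vfin,
      hZ, hZxy]
  exact ⟨isUnit_det_Kmat n, hentry, hentry ▸ by positivity⟩

/-- Let `n ≥ 1` and suppose the Kasteleyn matrix `K_n` over `ℚ` is invertible. Then for
`0 ≤ i < j ≤ n−1`, the `((2i,2n+1),(2j,2n+1))` entry of `K_n⁻¹` equals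
`Z_n^{{(2i,2n+1),(2j,2n+1)}}/Z_n`; in particular it is nonnegative. -/
theorem Kinv_top_two (n : ℕ) (hn : 1 ≤ n) (hdet : IsUnit (Kmat n).det)
    (i j : ℕ) (hij : i < j) (hj : j + 1 ≤ n)
    (hx : ((2*(i:ℤ), 2*(n:ℤ)+1)) ∈ Vfin n) (hy : ((2*(j:ℤ), 2*(n:ℤ)+1)) ∈ Vfin n) :
    (Kmat n)⁻¹ ⟨(2*(i:ℤ), 2*(n:ℤ)+1), hx⟩ ⟨(2*(j:ℤ), 2*(n:ℤ)+1), hy⟩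
        = (Zpm n {(2*(i:ℤ), 2*(n:ℤ)+1), (2*(j:ℤ), 2*(n:ℤ)+1)} : ℚ) / (Zpm n ∅ : ℚ) ∧
      0 ≤ (Kmat n)⁻¹ ⟨(2*(i:ℤ), 2*(n:ℤ)+1), hx⟩ ⟨(2*(j:ℤ), 2*(n:ℤ)+1), hy⟩ := by
  exact (Kinv_top_two_general n rfl rfl (by simpa using hij)).2
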